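/- arXiv:2301.00784 — 3 statements merged into one kernel-verified Lean document; each statement's English description precedes it below -/
import Mathlib

section
/- Let m = Δ_1 + ⋯ + Δ_N be a regular multisegment with Δ_i = [a_i; b_i] and b_1 > b_2 > ⋯ > b_N, and let σ = σ_m be the associated permutation. Then for every 1 ≤ i ≤ N: (1) LC(Δ_i, m) holds if and only if σ^{−1} is strictly decreasing on X_{Δ_i,m}; (2) RC(Δ_i, m) holds if and only if σ^{−1} is strictly decreasing on X̃_{Δ_i,m}. -/
/-- A segment `[a;b]` is a pair of integers `a ≤ b`. -/
structure Segment where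
  a : ℤ
  b : ℤ
  le : a ≤ b

namespace Segment

/-- `Δ ≺ Δ'` : the segment `Δ = [a;b]` precedes `Δ' = [c;d]`,
i.e. `a < c`, `c - 1 ≤ b` and `b < d`. -/
def prec (Δ Δ' : Segment) : Prop :=
  Δ.a < Δ'.a ∧ Δ'.a - 1 ≤ Δ.b ∧ Δ.b < Δ'.b

/-- `←Δ = [a-1; b-1]`. -/
def shift (Δ : Segment) : Segment :=
  ⟨Δ.a - 1, Δ.b - 1, by have := Δ.le; omega⟩

instance (Δ Δ' : Segment) : Decidable (Δ.prec Δ') := by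
  unfold prec; infer_instance

end Segment

/-- A multisegment (given as an indexed family of segments) is regular if the beginnings
of its segments are pairwise distinct and the ends of its segments are pairwise distinct. -/
def Regular {ι : Type*} (Δ : ι → Segment) : Prop :=
  (∀ i j : ι, (Δ i).a = (Δ j).a → i = j) ∧ (∀ i j : ι, (Δ i).b = (Δ j).b → i = j)

/-- The condition `LC(Δ₀, m)` : there is an injective function
`f : X_{Δ₀,m} → Y_{Δ₀,m}` with `Δ_{f i} ≺ Δ_i` for all `i ∈ X_{Δ₀,m}`,
where `X_{Δ₀,m} = {i | Δ₀ ≺ Δ_i}` and `Y_{Δ₀,m} = {i | ←Δ₀ ≺ Δ_i}`. -/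
def LC {ι : Type*} (Δ₀ : Segment) (Δ : ι → Segment) : Prop :=
  ∃ f : ι → ι, Set.InjOn f {i | Δ₀.prec (Δ i)} ∧
    ∀ i : ι, Δ₀.prec (Δ i) → Δ₀.shift.prec (Δ (f i)) ∧ (Δ (f i)).prec (Δ i)

/-- The condition `RC(Δ₀, m)` : there is an injective function
`f : X̃_{Δ₀,m} → Ỹ_{Δ₀,m}` with `Δ_i ≺ Δ_{f i}` for all `i ∈ X̃_{Δ₀,m}`,
where `X̃_{Δ₀,m} = {i | Δ_i ≺ Δ₀}` and `Ỹ_{Δ₀,m} = {i | ←Δ_i ≺ Δ₀}`. -/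
def RC {ι : Type*} (Δ₀ : Segment) (Δ : ι → Segment) : Prop :=
  ∃ f : ι → ι, Set.InjOn f {i | (Δ i).prec Δ₀} ∧
    ∀ i : ι, (Δ i).prec Δ₀ → (Δ (f i)).shift.prec Δ₀ ∧ (Δ i).prec (Δ (f i))

/-!
Order segments by comparing both endpoints strictly. For `Δ₀` in a regular multisegment, `LC(Δ₀, m)`
asks for an injection `f` on `X_{Δ₀,m}` that strictly lowers every element and takes values in
`X_{Δ₀,m} ∪ {Δ₀}`. Such an `f` exists exactly when `X_{Δ₀,m}` is a chain: on a chain, take immediate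
predecessors; conversely, if `x` and `y` were incomparable, `f` would squeeze `x`, `y` and all
elements below them other than `Δ₀` into the set of elements below `x` or `y`, which has fewer
elements. Since `b` decreases with the index and `a` increases along `σ`, being a chain means that
`σ⁻¹` is strictly decreasing. Finally, `RC` is `LC` for the reflected segments `[-b;-a]`.
-/

section DescendingInjection

open Set

variable {α : Type*} {r : α → α → Prop} [IsStrictOrder α r] {s : Set α} {a : α}

theorem isChain_of_descending_injOn (hfin : ∀ x ∈ s, {z ∈ s | r z x}.Finite) {f : α → α}
    (hinj : InjOn f s) (hf : ∀ x ∈ s, f x ∈ insert a s ∧ r (f x) x) : IsChain r s := by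
  intro x hx y hy hxy
  by_contra! ⟨hxy_lt, hyx_lt⟩
  let L : Set α := {z ∈ insert a s | r z x ∨ r z y}
  have hL : L.Finite := (((hfin x hx).union (hfin y hy)).insert a).subset <| by
    rintro z ⟨rfl | hz, hzx | hzy⟩ <;> simp_all
  have hy_L : y ∉ L := fun h => h.2.elim hyx_lt (irrefl y)
  have hx_L : x ∉ insert y L := by
    rintro (h | h)
    exacts [hxy h, h.2.elim (irrefl x) hxy_lt]
  have hsub : insert x (insert y L) \ {a} ⊆ s := by
    rintro z ⟨rfl | rfl | ⟨rfl | hz, -⟩, hza⟩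
    exacts [hx, hy, absurd rfl hza, hz]
  have hmaps : ∀ z ∈ insert x (insert y L) \ {a}, f z ∈ L := by
    intro z hz
    obtain ⟨hfz, hlt⟩ := hf z (hsub hz)
    refine ⟨hfz, ?_⟩
    rcases hz.1 with rfl | rfl | ⟨-, hzx | hzy⟩
    exacts [.inl hlt, .inr hlt, .inl (_root_.trans hlt hzx), .inr (_root_.trans hlt hzy)]
  have hle := ncard_le_ncard_of_injOn f hmaps (hinj.mono hsub) hL
  have hpred := pred_ncard_le_ncard_sdiff_singleton (insert x (insert y L)) a
  rw [ncard_insert_of_notMem hx_L (hL.insert y), ncard_insert_of_notMem hy_L hL] at hpred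
  omega

theorem exists_descending_injOn_of_isChain (hs : IsChain r s)
    (hfin : ∀ x ∈ s, {z ∈ s | r z x}.Finite) (ha : ∀ x ∈ s, r a x) :
    ∃ f : α → α, InjOn f s ∧ ∀ x ∈ s, f x ∈ insert a s ∧ r (f x) x := by
  have hpred : ∀ x ∈ s, ∃ p, (p ∈ insert a s ∧ r p x) ∧ ∀ z ∈ s, r z x → ¬ r p z := by
    intro x hx
    let := partialOrderOfSO r
    have hbelow : {z ∈ insert a s | r z x}.Finite := ((hfin x hx).insert a).subset <| by
      rintro z ⟨rfl | hz, hzx⟩ <;> simp_all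
    obtain ⟨p, hp, hmax⟩ := hbelow.exists_maximal ⟨a, mem_insert a s, ha x hx⟩
    exact ⟨p, hp, fun z hz hzx (hpz : p < z) => hpz.not_ge (hmax ⟨.inr hz, hzx⟩ hpz.le)⟩
  choose! f hf hmax using hpred
  refine ⟨f, fun x hx y hy hfxy => ?_, hf⟩
  by_contra hne
  rcases hs hx hy hne with hlt | hlt
  · exact hmax y hy x hx hlt (hfxy ▸ (hf x hx).2)
  · exact hmax x hx y hy hlt (hfxy ▸ (hf y hy).2)

theorem exists_descending_injOn_iff_isChain (hfin : ∀ x ∈ s, {z ∈ s | r z x}.Finite)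
    (ha : ∀ x ∈ s, r a x) :
    (∃ f : α → α, InjOn f s ∧ ∀ x ∈ s, f x ∈ insert a s ∧ r (f x) x) ↔ IsChain r s :=
  ⟨fun ⟨_, hinj, hf⟩ => isChain_of_descending_injOn hfin hinj hf,
    fun hs => exists_descending_injOn_of_isChain hs hfin ha⟩

end DescendingInjection

theorem strictAntiOn_iff_isChain {α β : Type*} [LinearOrder α] [Preorder β] {g : α → β}
    {s : Set α} : StrictAntiOn g s ↔ IsChain (fun x y => g x < g y ∧ y < x) s := by
  constructor
  · intro hg x hx y hy hne
    rcases hne.lt_or_gt with hlt | hlt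
    · exact .inr ⟨hg hx hy hlt, hlt⟩
    · exact .inl ⟨hg hy hx hlt, hlt⟩
  · intro hs x hx y hy hlt
    rcases hs hx hy hlt.ne with ⟨-, hgt⟩ | ⟨hg, -⟩
    · exact absurd hgt hlt.not_gt
    · exact hg

namespace Segment

/-- The strict order on segments in which both endpoints increase: `≺` without the condition
that the two segments be linked. -/
def EndpointsLT (Δ Δ' : Segment) : Prop :=
  Δ.a < Δ'.a ∧ Δ.b < Δ'.b

instance : IsStrictOrder Segment EndpointsLT where
  irrefl _ h := h.1.false
  trans _ _ _ h h' := ⟨h.1.trans h'.1, h.2.trans h'.2⟩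

/-- The mirror image `[-b;-a]` of a segment `[a;b]`, which exchanges the roles of `LC` and `RC`. -/
def reflect (Δ : Segment) : Segment :=
  ⟨-Δ.b, -Δ.a, neg_le_neg Δ.le⟩

theorem reflect_prec_reflect {Δ Δ' : Segment} : Δ.reflect.prec Δ'.reflect ↔ Δ'.prec Δ := by
  simp only [prec, reflect]
  omega

theorem shift_reflect_prec_reflect {Δ Δ' : Segment} :
    Δ.reflect.shift.prec Δ'.reflect ↔ Δ'.shift.prec Δ := by
  simp only [prec, shift, reflect]
  omega

theorem reflect_endpointsLT_reflect {Δ Δ' : Segment} :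
    Δ.reflect.EndpointsLT Δ'.reflect ↔ Δ'.EndpointsLT Δ := by
  simp only [EndpointsLT, reflect]
  omega

theorem EndpointsLT.shift_prec_and_prec {Δ₀ Δ Δ' : Segment} (h : Δ₀.prec Δ')
    (hlt : Δ.EndpointsLT Δ') (hΔ : Δ = Δ₀ ∨ Δ₀.prec Δ) : Δ₀.shift.prec Δ ∧ Δ.prec Δ' := by
  have := Δ₀.le
  rcases hΔ with rfl | hΔ <;> simp only [prec, shift, EndpointsLT] at * <;> omega

theorem prec_of_shift_prec {Δ₀ Δ : Segment} (h : Δ₀.shift.prec Δ) (ha : Δ.a ≠ Δ₀.a)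
    (hb : Δ.b ≠ Δ₀.b) : Δ₀.prec Δ := by
  simp only [prec, shift] at *
  omega

end Segment

section IndexedFamily

open Segment

variable {ι : Type*} {Δ : ι → Segment}

theorem finite_setOf_prec (ha : Function.Injective fun j => (Δ j).a) (Δ₀ : Segment) :
    {j | Δ₀.prec (Δ j)}.Finite := by
  refine ((Set.finite_Icc Δ₀.a (Δ₀.b + 1)).preimage ha.injOn).subset fun j hj => ?_
  exact ⟨hj.1.le, by linarith [hj.2.1]⟩

theorem Regular.shift_prec_and_prec_iff (hreg : Regular Δ) {i j k : ι}
    (h : (Δ i).prec (Δ j)) :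
    (Δ i).shift.prec (Δ k) ∧ (Δ k).prec (Δ j) ↔
      k ∈ insert i {l | (Δ i).prec (Δ l)} ∧ (Δ k).EndpointsLT (Δ j) := by
  constructor
  · rintro ⟨hshift, hprec⟩
    refine ⟨or_iff_not_imp_left.2 fun hki => ?_, hprec.1, hprec.2.2⟩
    exact prec_of_shift_prec hshift (mt (hreg.1 k i) hki) (mt (hreg.2 k i) hki)
  · rintro ⟨hk, hlt⟩
    exact hlt.shift_prec_and_prec h (hk.imp_left (congrArg Δ))

theorem Regular.lc_iff_isChain (hreg : Regular Δ) (i : ι) :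
    LC (Δ i) Δ ↔ IsChain (InvImage EndpointsLT Δ) {j | (Δ i).prec (Δ j)} := by
  have : IsStrictOrder ι (InvImage EndpointsLT Δ) := {}
  rw [← exists_descending_injOn_iff_isChain (a := i)
    (fun _ _ => (finite_setOf_prec hreg.1 (Δ i)).subset (Set.sep_subset _ _))
    (fun _ hj => ⟨hj.1, hj.2.2⟩)]
  exact exists_congr fun _ => and_congr_right fun _ => forall₂_congr fun j hj =>
    hreg.shift_prec_and_prec_iff hj

theorem Regular.reflect (hreg : Regular Δ) : Regular fun j => (Δ j).reflect :=
  ⟨fun i j h => hreg.2 i j (neg_injective h), fun i j h => hreg.1 i j (neg_injective h)⟩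

theorem lc_reflect_iff_rc {Δ₀ : Segment} :
    LC Δ₀.reflect (fun j => (Δ j).reflect) ↔ RC Δ₀ Δ := by
  simp only [LC, RC, reflect_prec_reflect, shift_reflect_prec_reflect]

theorem Regular.rc_iff_isChain (hreg : Regular Δ) (i : ι) :
    RC (Δ i) Δ ↔ IsChain (InvImage EndpointsLT Δ) {j | (Δ j).prec (Δ i)} := by
  rw [← lc_reflect_iff_rc, hreg.reflect.lc_iff_isChain i]
  simp only [IsChain, InvImage, reflect_prec_reflect, reflect_endpointsLT_reflect, or_comm]

theorem strictAntiOn_symm_iff_isChain {κ : Type*} [LinearOrder ι] [LinearOrder κ]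
    (hb : StrictAnti fun j => (Δ j).b) {σ : κ ≃ ι} (hσ : StrictMono fun k => (Δ (σ k)).a)
    {s : Set ι} : StrictAntiOn σ.symm s ↔ IsChain (InvImage EndpointsLT Δ) s := by
  have ha_iff (x y : ι) : σ.symm x < σ.symm y ↔ (Δ x).a < (Δ y).a := by
    simpa only [σ.apply_symm_apply] using (hσ.lt_iff_lt (a := σ.symm x) (b := σ.symm y)).symm
  have hb_iff (x y : ι) : y < x ↔ (Δ x).b < (Δ y).b := hb.lt_iff_gt.symm
  simp only [strictAntiOn_iff_isChain, ha_iff, hb_iff]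
  rfl

end IndexedFamily

theorem statement2_general {ι κ : Type*} [LinearOrder ι] [LinearOrder κ] (Δ : ι → Segment)
    (hb : StrictAnti fun j => (Δ j).b) (σ : κ ≃ ι) (hσ : StrictMono fun k => (Δ (σ k)).a)
    (i : ι) :
    (LC (Δ i) Δ ↔ StrictAntiOn σ.symm {j | (Δ i).prec (Δ j)}) ∧
    (RC (Δ i) Δ ↔ StrictAntiOn σ.symm {j | (Δ j).prec (Δ i)}) := by
  have hreg : Regular Δ :=
    ⟨fun x y h => σ.symm.injective (hσ.injective (by simpa using h)), fun _ _ h => hb.injective h⟩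
  simp only [strictAntiOn_symm_iff_isChain hb hσ]
  exact ⟨hreg.lc_iff_isChain i, hreg.rc_iff_isChain i⟩

/-- Lemma 3.3 (lemLCRCdecr): for an ordered regular multisegment `m = Δ_1 + ⋯ + Δ_N`
(with `b_1 > ⋯ > b_N`) with associated permutation `σ` (i.e. `a_{σ(1)} < ⋯ < a_{σ(N)}`),
and for every `i` : `LC(Δ_i, m)` holds iff `σ⁻¹` is strictly decreasing on `X_{Δ_i,m}`,
and `RC(Δ_i, m)` holds iff `σ⁻¹` is strictly decreasing on `X̃_{Δ_i,m}`. -/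
theorem statement2 {N : ℕ} (Δ : Fin N → Segment) (hreg : Regular Δ)
    (hb : ∀ i j : Fin N, i < j → (Δ j).b < (Δ i).b)
    (σ : Equiv.Perm (Fin N))
    (hσ : ∀ i j : Fin N, i < j → (Δ (σ i)).a < (Δ (σ j)).a)
    (i : Fin N) :
    (LC (Δ i) Δ ↔ StrictAntiOn (fun j => σ⁻¹ j) {j | (Δ i).prec (Δ j)}) ∧
    (RC (Δ i) Δ ↔ StrictAntiOn (fun j => σ⁻¹ j) {j | (Δ j).prec (Δ i)}) :=
  statement2_general Δ (fun i j => hb i j) σ (fun i j => hσ i j) i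
end

section
/- (Lewis Carroll / Desnanot–Jacobi identity) Let R be a commutative ring and M a square N×N matrix with entries in R. For all 1 ≤ a < a' ≤ N and 1 ≤ b < b' ≤ N, det(M) · det(M_{a,a'}^{b,b'}) = det(M_{a}^{b}) · det(M_{a'}^{b'}) − det(M_{a}^{b'}) · det(M_{a'}^{b}). -/
/-!
Let `P` be `M` with row `a` replaced by the basis vector `e_b`. Row `a` of `P * adj M` is row `b`
of `adj M`, and its other rows are those of `det M • 1`. Comparing entries in
`adj P * (P * adj M) = det P • adj M`, where `det P` and column `a` of `adj P` are read off from
`adj M`, evaluates a `2 × 2` minor of `adj M` as `det M` times an entry of `adj P`. No division by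
`det M` takes place, so this works over every commutative ring. On `Fin (n + 2)` the entries of
`adj M` are signed first minors of `M` and those of `adj P` are signed second minors.
-/

section Adjugate

open Matrix

variable {R ι : Type*} [CommRing R] [Fintype ι] [DecidableEq ι]

theorem adjugate_updateRow_self (M : Matrix ι ι R) (i j : ι) (v : ι → R) :
    (M.updateRow i v).adjugate j i = M.adjugate j i := by
  simp only [adjugate_apply, updateRow_idem]

theorem updateRow_single_mul_adjugate (M : Matrix ι ι R) (i j : ι) :
    M.updateRow i (Pi.single j 1) * M.adjugate =
      (M.det • (1 : Matrix ι ι R)).updateRow i (M.adjugate j) := by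
  rw [updateRow_mul, mul_adjugate, single_one_vecMul, row_def]

theorem adjugate_updateRow_single_mul (M : Matrix ι ι R) (i j : ι) :
    (M.updateRow i (Pi.single j 1)).adjugate *
        (M.det • (1 : Matrix ι ι R)).updateRow i (M.adjugate j) =
      M.adjugate j i • M.adjugate := by
  rw [← updateRow_single_mul_adjugate, ← Matrix.mul_assoc, adjugate_mul, smul_one_mul,
    ← adjugate_apply]

theorem det_mul_adjugate_updateRow_single (M : Matrix ι ι R) {a a' : ι} (h : a ≠ a') (b b' : ι) :
    M.det * (M.updateRow a (Pi.single b 1)).adjugate b' a' =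
      M.adjugate b a * M.adjugate b' a' - M.adjugate b' a * M.adjugate b a' := by
  have hentry := congr_fun₂ (adjugate_updateRow_single_mul M a b) b' a'
  rw [mul_apply, Fintype.sum_eq_add a a' h] at hentry
  · simp only [updateRow_self, updateRow_ne h.symm, adjugate_updateRow_self, Matrix.smul_apply,
      one_apply_eq, smul_eq_mul, mul_one] at hentry
    linear_combination hentry
  · rintro k ⟨hka, hka'⟩
    rw [updateRow_ne hka, Matrix.smul_apply, one_apply_ne hka', smul_zero, mul_zero]

end Adjugate

section Submatrix

open Matrix

theorem submatrix_updateRow_of_injective {l m n o α : Type*} [DecidableEq l] [DecidableEq m]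
    (M : Matrix m n α) {f : l → m} (hf : Function.Injective f) (g : o → n) (i : l) (v : n → α) :
    (M.updateRow (f i) v).submatrix f g = (M.submatrix f g).updateRow i (v ∘ g) := by
  ext k c
  simp only [submatrix_apply, updateRow_apply, hf.eq_iff, Function.comp_apply]

variable {R : Type*} [CommRing R] {n : ℕ}

theorem adjugate_updateRow_single_succAbove (M : Matrix (Fin (n + 2)) (Fin (n + 2)) R)
    (a' b' : Fin (n + 2)) (i j : Fin (n + 1)) :
    (M.updateRow (a'.succAbove i) (Pi.single (b'.succAbove j) 1)).adjugate b' a' =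
      (-1) ^ (a' + b' : ℕ) * ((-1) ^ (i + j : ℕ) *
        (M.submatrix (fun k => a'.succAbove (i.succAbove k))
          (fun k => b'.succAbove (j.succAbove k))).det) := by
  have hsingle : (Pi.single (b'.succAbove j) 1 : Fin (n + 2) → R) ∘ b'.succAbove = Pi.single j 1 :=
    Function.update_comp_eq_of_injective (0 : Fin (n + 2) → R) b'.succAbove_right_injective j 1
  rw [adjugate_fin_succ_eq_det_submatrix,
    submatrix_updateRow_of_injective M a'.succAbove_right_injective, hsingle, ← adjugate_apply,
    adjugate_fin_succ_eq_det_submatrix, submatrix_submatrix]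
  rfl

end Submatrix

/-- The row `a'.succAbove i` has number `i` if it precedes row `a'` and `i + 1` otherwise, and
likewise for columns, so the sign is `+1` exactly when the two deleted rows and the two deleted
columns are listed in the same order. -/
theorem statement9_general {R : Type*} [CommRing R] {n : ℕ}
    (M : Matrix (Fin (n + 2)) (Fin (n + 2)) R) (a' b' : Fin (n + 2)) (i j : Fin (n + 1)) :
    M.det *
      (M.submatrix (fun k => a'.succAbove (i.succAbove k))
        (fun k => b'.succAbove (j.succAbove k))).det =
    (-1) ^ (i + j + (a'.succAbove i + b'.succAbove j) : ℕ) *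
      ((M.submatrix (a'.succAbove i).succAbove (b'.succAbove j).succAbove).det *
          (M.submatrix a'.succAbove b'.succAbove).det -
        (M.submatrix (a'.succAbove i).succAbove b'.succAbove).det *
          (M.submatrix a'.succAbove (b'.succAbove j).succAbove).det) := by
  have hadj := det_mul_adjugate_updateRow_single M (a'.succAbove_ne i) (b'.succAbove j) b'
  rw [adjugate_updateRow_single_succAbove] at hadj
  simp only [Matrix.adjugate_fin_succ_eq_det_submatrix, pow_add] at hadj
  have hsign : (-1 : R) ^ (i + j : ℕ) * (-1) ^ (i + j : ℕ) = 1 :=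
    pow_mul_pow_eq_one _ (by rw [neg_mul_neg, one_mul])
  have hunit (k : ℕ) : IsUnit ((-1 : R) ^ k) := isUnit_one.neg.pow k
  apply (hunit (i + j)).mul_left_cancel
  rw [pow_add _ (i + j : ℕ), ← mul_assoc _ (_ * _), ← mul_assoc _ (_ ^ _), hsign, one_mul]
  apply (hunit (a' + b')).mul_left_cancel
  simp only [pow_add]
  linear_combination hadj

/-- The Lewis Carroll (Desnanot–Jacobi) identity: for a square matrix `M` over a
commutative ring and row indices `a < a'`, column indices `b < b'`,
`det(M) · det(M_{a,a'}^{b,b'}) = det(M_a^b) · det(M_{a'}^{b'}) − det(M_a^{b'}) · det(M_{a'}^b)`,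
where sub/superscripts denote deleted rows/columns (deletions are realized by composing
with the order-preserving maps `Fin.succAbove` skipping the deleted indices). -/
theorem statement9 {R : Type*} [CommRing R] {n : ℕ}
    (M : Matrix (Fin (n + 2)) (Fin (n + 2)) R)
    (a a' b b' : Fin (n + 2)) (haa : a < a') (hbb : b < b') :
    M.det *
      (M.submatrix
        (fun j => a'.succAbove
          ((a.castLT (by have := Fin.lt_def.mp haa; have := a'.isLt; omega :
              (a : ℕ) < n + 1)).succAbove j))
        (fun j => b'.succAbove
          ((b.castLT (by have := Fin.lt_def.mp hbb; have := b'.isLt; omega :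
              (b : ℕ) < n + 1)).succAbove j))).det =
    (M.submatrix a.succAbove b.succAbove).det *
        (M.submatrix a'.succAbove b'.succAbove).det -
      (M.submatrix a.succAbove b'.succAbove).det *
        (M.submatrix a'.succAbove b.succAbove).det := by
  have key := statement9_general M a' b' (a.castPred (Fin.ne_last_of_lt haa))
    (b.castPred (Fin.ne_last_of_lt hbb))
  rwa [Fin.succAbove_castPred_of_lt _ _ haa, Fin.succAbove_castPred_of_lt _ _ hbb,
    Fin.coe_castPred, Fin.coe_castPred, Even.neg_one_pow ⟨_, rfl⟩, one_mul] at key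
end

section
/- Let σ ∈ S_N be a permutation avoiding the patterns 4231 and 3412, choose i ∈ {1,…,N}, and let σ̄^i ∈ S_{N−1} be the flattened permutation obtained from σ by removing (i, σ(i)). Then for every (N−1)×(N−1) matrix M over a commutative ring, det(M|_{Γ[id,σ]_i^{σ(i)}}) = det(M|_{Γ[id,σ̄^i]}), where Γ[id,σ]_i^{σ(i)} ⊆ [N−1]×[N−1] is obtained from Γ[id,σ] by deleting row i and column σ(i) and relabelling the remaining rows and columns order-preservingly. -/
/-- `σ ∈ S_N` contains the pattern `τ ∈ S_k` : there are indices `i_1 < ⋯ < i_k` with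
`σ(i_s) < σ(i_t) ↔ τ(s) < τ(t)` for all `s, t`. -/
def ContainsPattern {N k : ℕ} (σ : Equiv.Perm (Fin N)) (τ : Equiv.Perm (Fin k)) : Prop :=
  ∃ g : Fin k ↪o Fin N, ∀ s t : Fin k, σ (g s) < σ (g t) ↔ τ s < τ t

/-- `σ` avoids the pattern `τ`. -/
def Avoids {N k : ℕ} (σ : Equiv.Perm (Fin N)) (τ : Equiv.Perm (Fin k)) : Prop :=
  ¬ ContainsPattern σ τ

/-- The pattern `4231` (in one-line notation), as a permutation of `Fin 4`. -/
def perm4231 : Equiv.Perm (Fin 4) := Equiv.swap 0 3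

/-- The pattern `3412` (in one-line notation), as a permutation of `Fin 4`. -/
def perm3412 : Equiv.Perm (Fin 4) := Equiv.swap 0 2 * Equiv.swap 1 3

/-- The Bruhat order on `S_N`, characterized by:
`σ' ≤ σ` iff `#{k ≤ i : σ'(k) ≥ j} ≤ #{k ≤ i : σ(k) ≥ j}` for all `i, j`. -/
def BruhatLE {N : ℕ} (σ' σ : Equiv.Perm (Fin N)) : Prop :=
  ∀ i j : Fin N,
    (Finset.univ.filter fun k => k ≤ i ∧ j ≤ σ' k).card ≤
      (Finset.univ.filter fun k => k ≤ i ∧ j ≤ σ k).card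

instance {N : ℕ} (σ' σ : Equiv.Perm (Fin N)) : Decidable (BruhatLE σ' σ) := by
  unfold BruhatLE; infer_instance

/-- `Γ[id,σ] = {(i, σ'(i)) : σ' ≤ σ}`. -/
def Gamma {N : ℕ} (σ : Equiv.Perm (Fin N)) : Set (Fin N × Fin N) :=
  {p | ∃ σ' : Equiv.Perm (Fin N), BruhatLE σ' σ ∧ σ' p.1 = p.2}

open Classical in
/-- `M|_{Γ[id,σ]}` : the matrix whose `(i,j)` entry is `M i j` if `(i,j) ∈ Γ[id,σ]`
and `0` otherwise. -/
noncomputable def restrictGamma {N : ℕ} {R : Type*} [CommRing R]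
    (M : Matrix (Fin N) (Fin N) R) (σ : Equiv.Perm (Fin N)) :
    Matrix (Fin N) (Fin N) R :=
  Matrix.of fun i j => if (i, j) ∈ Gamma σ then M i j else 0

/-!
Only the permutations whose graph lies in the given region contribute to the determinant of a
restricted matrix, so the two determinants agree as soon as the two regions contain the graphs of
the same permutations, even if the regions themselves differ.

A position `(a, b)` lies in `Γ[id,σ]` iff the graph of `σ` has a point weakly north-east and a
point weakly south-west of it. Let `ρ` pass through `(i, σ i)`, with its graph in `Γ[id,σ]`, and
suppose that `(i, σ i)` is the only point of `σ` weakly north-east of some other point `(a, ρ a)`.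
Then `ρ` has more points there than `σ`, hence also more points strictly south-west of `(a, ρ a)`;
but if no `4231` or `3412` involves `(i, σ i)`, these points of `ρ` inject into those of `σ`.
The same holds with north-east and south-west exchanged, by reversing both orders. Hence the graph
of `ρ` without `(i, σ i)` stays in the region when `(i, σ i)` is deleted from `σ`.
-/

section Determinant

open Finset

variable {n R : Type*} [Fintype n] [DecidableEq n] [CommRing R]

theorem det_of_ite_eq_sum_filter (M : Matrix n n R) (S : n → n → Prop) [DecidableRel S] :
    (Matrix.of fun k l => if S k l then M k l else 0).det =
      ∑ π : Equiv.Perm n with ∀ k, S k (π k), Equiv.Perm.sign π • ∏ k, M k (π k) := by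
  rw [← Matrix.det_transpose, Matrix.det_apply, sum_filter]
  simp only [Matrix.transpose_apply, Matrix.of_apply, Fintype.prod_ite_zero, smul_ite, smul_zero]

theorem det_of_ite_congr (M : Matrix n n R) {S T : n → n → Prop} [DecidableRel S] [DecidableRel T]
    (h : ∀ π : Equiv.Perm n, (∀ k, S k (π k)) ↔ ∀ k, T k (π k)) :
    (Matrix.of fun k l => if S k l then M k l else 0).det =
      (Matrix.of fun k l => if T k l then M k l else 0).det := by
  rw [det_of_ite_eq_sum_filter, det_of_ite_eq_sum_filter]
  exact sum_congr (filter_congr fun π _ => h π) fun _ _ => rfl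

end Determinant

section Regions

variable {α β : Type*} [LE α] [LE β]

/-- Some point of the graph of `σ` lies weakly north-east of the position `(a, b)`. As in a matrix,
rows are numbered downwards and columns from left to right. -/
def HasNorthEast (σ : α → β) (a : α) (b : β) : Prop :=
  ∃ k, k ≤ a ∧ b ≤ σ k

/-- Some point of the graph of `σ` lies weakly south-west of the position `(a, b)`, in the
orientation of `HasNorthEast`. -/
def HasSouthWest (σ : α → β) (a : α) (b : β) : Prop :=
  ∃ l, a ≤ l ∧ σ l ≤ b

end Regions

section Patterns

variable {α β : Type*} [Preorder α] [Preorder β] {k : ℕ} {σ : α → β} {i : α}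

/-- No occurrence of the pattern `τ` in `σ` involves the point `(i, σ i)`. -/
def AvoidsThrough (σ : α → β) (τ : Equiv.Perm (Fin k)) (i : α) : Prop :=
  ∀ g : Fin k ↪o α, (∀ s t, σ (g s) < σ (g t) ↔ τ s < τ t) → i ∉ Set.range g

theorem Avoids.avoidsThrough {N : ℕ} {σ : Equiv.Perm (Fin N)} {τ : Equiv.Perm (Fin k)}
    (h : Avoids σ τ) (i : Fin N) : AvoidsThrough σ τ i :=
  fun g hg _ => h ⟨g, hg⟩

theorem AvoidsThrough.not_strictMono {τ : Equiv.Perm (Fin k)} (h : AvoidsThrough σ τ i)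
    {g : Fin k → α} (hg : StrictMono g) (hi : i ∈ Set.range g) :
    ¬ StrictMono (σ ∘ g ∘ τ.symm) := fun hσ =>
  h (OrderEmbedding.ofStrictMono g hg)
    (fun s t => by simpa using hσ.lt_iff_lt (a := τ s) (b := τ t)) hi

theorem AvoidsThrough.dual {τ : Equiv.Perm (Fin k)} (h : AvoidsThrough σ τ i) :
    AvoidsThrough (α := αᵒᵈ) (β := βᵒᵈ) σ (Fin.revPerm * τ * Fin.revPerm) i := by
  rintro g hg ⟨s, rfl⟩
  let g' : Fin k ↪o α := OrderEmbedding.ofStrictMono (fun t => g t.rev)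
    fun _ _ hst => g.strictMono (Fin.rev_lt_rev.mpr hst)
  exact h g' (fun s t => (hg t.rev s.rev).trans (by simp)) ⟨s.rev, congrArg g s.rev_rev⟩

theorem AvoidsThrough.not_4231 (h : AvoidsThrough σ perm4231 i) {a b c d : α}
    (hi : i ∈ Set.range ![a, b, c, d]) (hab : a < b) (hbc : b < c) (hcd : c < d)
    (hdb : σ d < σ b) (hbc' : σ b < σ c) (hca : σ c < σ a) : False := by
  have hσ : σ ∘ ![a, b, c, d] ∘ perm4231.symm = ![σ d, σ b, σ c, σ a] := by
    funext s
    fin_cases s <;> rfl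
  exact h.not_strictMono (by simp [*]) hi (by simp [*])

theorem AvoidsThrough.not_3412 (h : AvoidsThrough σ perm3412 i) {a b c d : α}
    (hi : i ∈ Set.range ![a, b, c, d]) (hab : a < b) (hbc : b < c) (hcd : c < d)
    (hcd' : σ c < σ d) (hda : σ d < σ a) (hab' : σ a < σ b) : False := by
  have hσ : σ ∘ ![a, b, c, d] ∘ perm3412.symm = ![σ c, σ d, σ a, σ b] := by
    funext s
    fin_cases s <;> rfl
  exact h.not_strictMono (by simp [*]) hi (by simp [*])

end Patterns

section Counting

open Finset

variable {α β : Type*} [Fintype α]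

theorem card_filter_and_apply_add_card_filter_not [Fintype β] (f : α ≃ β) (p : α → Prop)
    (q : β → Prop) [DecidablePred p] [DecidablePred q] :
    #{x | p x ∧ q (f x)} + #{y | ¬ q y} = #{x | ¬ p x ∧ ¬ q (f x)} + #{x | p x} := by
  have hq : #{y | ¬ q y} = #{x | ¬ q (f x)} := (card_equiv f (by simp)).symm
  have hp := card_filter_add_card_filter_not (s := {x | p x}) (fun x => q (f x))
  have hnq := card_filter_add_card_filter_not (s := {x | ¬ q (f x)}) p
  simp only [filter_filter, and_comm (a := ¬ q _)] at hp hnq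
  omega

theorem card_filter_and_apply_le_iff (f g : α ≃ β) (p : α → Prop) (q : β → Prop)
    [DecidablePred p] [DecidablePred q] :
    #{x | p x ∧ q (f x)} ≤ #{x | p x ∧ q (g x)} ↔
      #{x | ¬ p x ∧ ¬ q (f x)} ≤ #{x | ¬ p x ∧ ¬ q (g x)} := by
  have : Fintype β := .ofEquiv α f
  have hf := card_filter_and_apply_add_card_filter_not f p q
  have hg := card_filter_and_apply_add_card_filter_not g p q
  omega

end Counting

section Bruhat

open Finset Equiv

variable {N : ℕ} {ρ σ τ : Perm (Fin N)}

theorem BruhatLE.refl (σ : Perm (Fin N)) : BruhatLE σ σ :=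
  fun _ _ => le_rfl

theorem BruhatLE.trans (h₁ : BruhatLE ρ σ) (h₂ : BruhatLE σ τ) : BruhatLE ρ τ :=
  fun i j => (h₁ i j).trans (h₂ i j)

theorem bruhatLE_mul_swap {x y : Fin N} (hxy : x < y) (h : σ y < σ x) :
    BruhatLE (σ * swap x y) σ := by
  intro i j
  by_cases hy : y ≤ i
  · refine card_le_card_of_injOn (swap x y) (fun k hk => ?_) (Equiv.injective _).injOn
    obtain ⟨hki, hkj⟩ := (mem_filter.mp hk).2
    refine mem_filter.mpr ⟨mem_univ _, ?_, hkj⟩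
    rw [swap_apply_def]
    split_ifs
    exacts [hy, (hxy.trans_le hy).le, hki]
  · refine card_le_card (monotone_filter_right _ fun k _ ⟨hki, hkj⟩ => ⟨hki, ?_⟩)
    have hky : k ≠ y := fun e => hy (e ▸ hki)
    rcases eq_or_ne k x with rfl | hkx
    · rw [Perm.mul_apply, swap_apply_left] at hkj
      exact hkj.trans h.le
    · rwa [Perm.mul_apply, swap_apply_of_ne_of_ne hkx hky] at hkj

theorem BruhatLE.card_filter_lt_le (h : BruhatLE ρ σ) (a b : Fin N) :
    #{x | x < a ∧ b < ρ x} ≤ #{x | x < a ∧ b < σ x} := by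
  by_cases ha : IsMin a
  · simp [ha.not_lt]
  by_cases hb : IsMax b
  · simp [hb.not_lt]
  simpa only [Order.le_pred_iff_of_not_isMin ha, Order.succ_le_iff_of_not_isMax hb]
    using h (Order.pred a) (Order.succ b)

theorem BruhatLE.hasNorthEast (h : BruhatLE ρ σ) (a : Fin N) : HasNorthEast σ a (ρ a) := by
  have hρ : 0 < #{x | x ≤ a ∧ ρ a ≤ ρ x} := card_pos.mpr ⟨a, by simp⟩
  obtain ⟨k, hk⟩ := card_pos.mp (hρ.trans_le (h a (ρ a)))
  exact ⟨k, by simpa using hk⟩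

theorem BruhatLE.hasSouthWest (h : BruhatLE ρ σ) (a : Fin N) : HasSouthWest σ a (ρ a) := by
  have hρ : 0 < #{x | a ≤ x ∧ ρ x ≤ ρ a} := card_pos.mpr ⟨a, by simp⟩
  have hle := (card_filter_and_apply_le_iff ρ σ (· < a) (ρ a < ·)).mp
    (h.card_filter_lt_le a (ρ a))
  simp only [not_lt] at hle
  obtain ⟨l, hl⟩ := card_pos.mp (hρ.trans_le hle)
  exact ⟨l, by simpa using hl⟩

theorem exists_bruhatLE_apply_eq_of_hasNorthEast {a p : Fin N} (hap : a < p)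
    (h : HasNorthEast σ a (σ p)) : ∃ ρ, BruhatLE ρ σ ∧ ρ a = σ p := by
  by_cases hpa : σ p < σ a
  · exact ⟨σ * swap a p, bruhatLE_mul_swap hap hpa, by simp⟩
  have hap' : σ a < σ p := (not_lt.mp hpa).lt_of_ne (σ.injective.ne hap.ne)
  obtain ⟨k, hka, hpk⟩ := h
  have hka : k < a := hka.lt_of_ne (by rintro rfl; exact hap'.not_ge hpk)
  have hkp : k < p := hka.trans hap
  have hpk : σ p < σ k := hpk.lt_of_ne (σ.injective.ne hkp.ne')
  refine ⟨σ * swap k p * swap k a,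
    (bruhatLE_mul_swap hka ?_).trans (bruhatLE_mul_swap hkp hpk), by simp⟩
  simpa [swap_apply_of_ne_of_ne hka.ne' hap.ne] using hap'

theorem exists_bruhatLE_apply_eq_of_hasSouthWest {a p : Fin N} (hpa : p < a)
    (h : HasSouthWest σ a (σ p)) : ∃ ρ, BruhatLE ρ σ ∧ ρ a = σ p := by
  by_cases hap : σ a < σ p
  · exact ⟨σ * swap p a, bruhatLE_mul_swap hpa hap, by simp⟩
  have hpa' : σ p < σ a := (not_lt.mp hap).lt_of_ne (σ.injective.ne hpa.ne)
  obtain ⟨l, hal, hlp⟩ := h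
  have hal : a < l := hal.lt_of_ne (by rintro rfl; exact hpa'.not_ge hlp)
  have hpl : p < l := hpa.trans hal
  have hlp : σ l < σ p := hlp.lt_of_ne (σ.injective.ne hpl.ne')
  refine ⟨σ * swap p l * swap a l,
    (bruhatLE_mul_swap hal ?_).trans (bruhatLE_mul_swap hpl hlp), by simp⟩
  simpa [swap_apply_of_ne_of_ne hpa.ne' hal.ne] using hpa'

theorem mem_Gamma_iff {a b : Fin N} :
    (a, b) ∈ Gamma σ ↔ HasNorthEast σ a b ∧ HasSouthWest σ a b := by
  constructor
  · rintro ⟨ρ, hρ, hρa⟩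
    obtain rfl : ρ a = b := hρa
    exact ⟨hρ.hasNorthEast a, hρ.hasSouthWest a⟩
  · rintro ⟨hne, hsw⟩
    obtain ⟨p, rfl⟩ := σ.surjective b
    rcases lt_trichotomy a p with hap | rfl | hpa
    · exact exists_bruhatLE_apply_eq_of_hasNorthEast hap hne
    · exact ⟨σ, .refl σ, rfl⟩
    · exact exists_bruhatLE_apply_eq_of_hasSouthWest hpa hsw

end Bruhat

section Deletion

open Finset

variable {α β : Type*} [LinearOrder α] [LinearOrder β] {σ ρ : α ≃ β} {i a : α} {b : β}

theorem le_of_avoidsThrough_of_apply_le (h4231 : AvoidsThrough σ perm4231 i)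
    (h3412 : AvoidsThrough σ perm3412 i) (hia : i < a) (hab : σ a < b)
    {q l z : α} (haq : a < q) (hbq : b ≤ σ q) (hqi : σ q < σ i)
    (hql : q < l) (hlz : σ l ≤ σ z) (hzb : σ z < b) : q ≤ z := by
  by_contra! hzq
  have hlz : σ l < σ z := hlz.lt_of_ne (σ.injective.ne (hzq.trans hql).ne')
  have hle : ∀ x, i < x → x < q → σ x < b → σ x ≤ σ l := fun x hix hxq hxb => by
    by_contra! hlx
    exact h4231.not_4231 ⟨0, rfl⟩ hix hxq hql hlx (hxb.trans_le hbq) hqi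
  have hzi : z < i := by
    by_contra! hiz
    have hne : i ≠ z := by
      rintro rfl
      exact (hzb.trans_le hbq).not_gt hqi
    exact (hle z (hiz.lt_of_ne hne) hzq hzb).not_gt hlz
  have hal : σ a < σ l :=
    (hle a hia haq hab).lt_of_ne (σ.injective.ne (haq.trans hql).ne)
  exact h3412.not_3412 ⟨1, rfl⟩ hzi hia (haq.trans hql) hal hlz
    ((hzb.trans_le hbq).trans hqi)

theorem apply_lt_of_avoidsThrough (h3412 : AvoidsThrough σ perm3412 i) {q l x : α}
    (hix : i < x) (hxl : x ≤ l) (hlq : l < q) (hlb : σ l < b) (hbq : b ≤ σ q) (hqi : σ q < σ i)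
    (hx : ¬ (b ≤ σ x ∧ σ x < σ i)) : σ x < b := by
  by_contra! hbx
  have hix' : σ i < σ x :=
    (not_lt.mp fun hxi => hx ⟨hbx, hxi⟩).lt_of_ne (σ.injective.ne hix.ne)
  have hxl : x < l := hxl.lt_of_ne (by rintro rfl; exact hlb.not_ge hbx)
  exact h3412.not_3412 ⟨0, rfl⟩ hix hxl hlq (hlb.trans_le hbq) hqi hix'

theorem card_southWest_le_of_avoidsThrough [Fintype α] (h4231 : AvoidsThrough σ perm4231 i)
    (h3412 : AvoidsThrough σ perm3412 i) (hsw : ∀ x, HasSouthWest σ x (ρ x))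
    (hia : i < a) (hbi : b < σ i) (hlt : ∀ k ≤ a, k ≠ i → σ k < b) :
    #{x | a < x ∧ ρ x < b} ≤ #{x | a < x ∧ σ x < b} := by
  classical
  obtain ⟨p, rfl⟩ := σ.surjective b
  have hap : a < p := by
    by_contra! hpa
    exact (hlt p hpa (by rintro rfl; exact hbi.false)).false
  obtain ⟨q, hq, hqmin⟩ := exists_min_image ({x | a < x ∧ σ p ≤ σ x ∧ σ x < σ i} : Finset α) id
    ⟨p, by simp [hap, hbi]⟩
  simp only [mem_filter_univ, id] at hq hqmin
  obtain ⟨haq, hpq, hqi⟩ := hq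
  let D : Finset α := {x | a < x ∧ σ x < σ p}
  -- Points of `ρ` having a point of `σ` weakly south-west of them above row `q` are matched with
  -- the point of `σ` in the same row, the other ones with the point of `σ` in the same column.
  have hcover : ({x | a < x ∧ ρ x < σ p} : Finset α) ⊆
      D.filter (· < q) ∪ (D.filter (¬ · < q)).image (fun z => ρ.symm (σ z)) := by
    intro x hx
    simp only [D, mem_filter, mem_univ, true_and, mem_union, mem_image] at hx ⊢
    obtain ⟨hax, hxp⟩ := hx
    obtain ⟨l, hxl, hlx⟩ := hsw x
    have hlp : σ l < σ p := hlx.trans_lt hxp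
    rcases lt_trichotomy l q with hlq | rfl | hql
    · refine Or.inl ⟨⟨hax, ?_⟩, hxl.trans_lt hlq⟩
      exact apply_lt_of_avoidsThrough h3412 (hia.trans hax) hxl hlq hlp hpq hqi
        fun hx => (hqmin x ⟨hax, hx⟩).not_gt (hxl.trans_lt hlq)
    · exact absurd hpq hlp.not_ge
    · refine Or.inr ⟨σ.symm (ρ x), ?_, by simp⟩
      have hqz : q ≤ σ.symm (ρ x) := le_of_avoidsThrough_of_apply_le h4231 h3412 hia
        (hlt a le_rfl hia.ne') haq hpq hqi hql (by simpa using hlx) (by simpa using hxp)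
      exact ⟨⟨haq.trans_le hqz, by simpa using hxp⟩, hqz.not_gt⟩
  calc #{x | a < x ∧ ρ x < σ p}
      ≤ _ := (card_le_card hcover).trans (card_union_le _ _)
    _ ≤ _ := Nat.add_le_add_left card_image_le _
    _ = #D := card_filter_add_card_filter_not _

theorem exists_ne_northEast_of_avoidsThrough [Finite α] (h4231 : AvoidsThrough σ perm4231 i)
    (h3412 : AvoidsThrough σ perm3412 i) (hne : ∀ x, HasNorthEast σ x (ρ x))
    (hsw : ∀ x, HasSouthWest σ x (ρ x)) (hi : ρ i = σ i) (ha : a ≠ i) :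
    ∃ k ≠ i, k ≤ a ∧ ρ a ≤ σ k := by
  by_contra! hlt
  obtain ⟨k, hka, hak⟩ := hne a
  obtain rfl : k = i := by
    by_contra hki
    exact (hlt k hki hka).not_ge hak
  have hia : k < a := hka.lt_of_ne ha.symm
  have hai : ρ a < σ k := hak.lt_of_ne (hi ▸ ρ.injective.ne ha)
  have := Fintype.ofFinite α
  have hle : #{x | x ≤ a ∧ ρ a ≤ ρ x} ≤ #{x | x ≤ a ∧ ρ a ≤ σ x} :=
    (card_filter_and_apply_le_iff ρ σ (· ≤ a) (ρ a ≤ ·)).mpr <| by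
      simpa only [not_le] using card_southWest_le_of_avoidsThrough h4231 h3412 hsw hia hai
        fun x hxa hx => hlt x hx hxa
  have hρ : 1 < #{x | x ≤ a ∧ ρ a ≤ ρ x} :=
    one_lt_card.mpr ⟨k, by simp [hka, hi, hak], a, by simp, hia.ne⟩
  obtain ⟨x, hx, hxk⟩ := exists_mem_ne (hρ.trans_le hle) k
  obtain ⟨hxa, hax⟩ := mem_filter_univ x |>.mp hx
  exact (hlt x hxk hxa).not_ge hax

theorem exists_ne_southWest_of_avoidsThrough [Finite α] (h4231 : AvoidsThrough σ perm4231 i)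
    (h3412 : AvoidsThrough σ perm3412 i) (hne : ∀ x, HasNorthEast σ x (ρ x))
    (hsw : ∀ x, HasSouthWest σ x (ρ x)) (hi : ρ i = σ i) (ha : a ≠ i) :
    ∃ l ≠ i, a ≤ l ∧ σ l ≤ ρ a := by
  have h4231' : Fin.revPerm * perm4231 * Fin.revPerm = perm4231 := by decide
  have h3412' : Fin.revPerm * perm3412 * Fin.revPerm = perm3412 := by decide
  exact exists_ne_northEast_of_avoidsThrough (α := αᵒᵈ) (β := βᵒᵈ) (σ := σ) (ρ := ρ)
    (h4231' ▸ h4231.dual) (h3412' ▸ h3412.dual) hsw hne hi ha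

end Deletion

section Flattening

variable {n : ℕ}

/-- The permutation sending `i` to `j` and acting as `π` on the remaining indices, relabelled
order-preservingly; this is inverse to flattening at `i`. -/
def insertPoint (i j : Fin (n + 1)) (π : Equiv.Perm (Fin n)) : Equiv.Perm (Fin (n + 1)) :=
  (finSuccEquiv' i).trans (π.optionCongr.trans (finSuccEquiv' j).symm)

theorem insertPoint_self (i j : Fin (n + 1)) (π : Equiv.Perm (Fin n)) :
    insertPoint i j π i = j := by
  simp [insertPoint]

theorem insertPoint_succAbove (i j : Fin (n + 1)) (π : Equiv.Perm (Fin n)) (k : Fin n) :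
    insertPoint i j π (i.succAbove k) = j.succAbove (π k) := by
  simp [insertPoint]

variable {σ : Equiv.Perm (Fin (n + 1))} {i : Fin (n + 1)} {τ : Equiv.Perm (Fin n)}

theorem hasNorthEast_flatten_iff (hτ : ∀ k, σ (i.succAbove k) = (σ i).succAbove (τ k))
    {a b : Fin n} : HasNorthEast τ a b ↔
      ∃ k ≠ i, k ≤ i.succAbove a ∧ (σ i).succAbove b ≤ σ k := by
  simp [HasNorthEast, Fin.exists_iff_succAbove i, hτ]

theorem hasSouthWest_flatten_iff (hτ : ∀ k, σ (i.succAbove k) = (σ i).succAbove (τ k))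
    {a b : Fin n} : HasSouthWest τ a b ↔
      ∃ l ≠ i, i.succAbove a ≤ l ∧ σ l ≤ (σ i).succAbove b := by
  simp [HasSouthWest, Fin.exists_iff_succAbove i, hτ]

theorem mem_Gamma_succAbove (hτ : ∀ k, σ (i.succAbove k) = (σ i).succAbove (τ k)) {a b : Fin n}
    (h : (a, b) ∈ Gamma τ) : (i.succAbove a, (σ i).succAbove b) ∈ Gamma σ := by
  rw [mem_Gamma_iff, hasNorthEast_flatten_iff hτ, hasSouthWest_flatten_iff hτ] at h
  obtain ⟨⟨k, _, hk⟩, ⟨l, _, hl⟩⟩ := h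
  exact mem_Gamma_iff.mpr ⟨⟨k, hk⟩, ⟨l, hl⟩⟩

theorem graph_mem_Gamma_of_succAbove (h4231 : AvoidsThrough σ perm4231 i)
    (h3412 : AvoidsThrough σ perm3412 i)
    (hτ : ∀ k, σ (i.succAbove k) = (σ i).succAbove (τ k)) {π : Equiv.Perm (Fin n)}
    (h : ∀ k, (i.succAbove k, (σ i).succAbove (π k)) ∈ Gamma σ) (k : Fin n) :
    (k, π k) ∈ Gamma τ := by
  set ρ := insertPoint i (σ i) π
  have hρi : ρ i = σ i := insertPoint_self _ _ _
  have hρ : ∀ k, ρ (i.succAbove k) = (σ i).succAbove (π k) := insertPoint_succAbove _ _ _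
  have hmem : ∀ x, (x, ρ x) ∈ Gamma σ := by
    rw [Fin.forall_iff_succAbove i]
    exact ⟨⟨σ, .refl σ, hρi.symm⟩, fun k => hρ k ▸ h k⟩
  have hne : ∀ x, HasNorthEast σ x (ρ x) := fun x => (mem_Gamma_iff.mp (hmem x)).1
  have hsw : ∀ x, HasSouthWest σ x (ρ x) := fun x => (mem_Gamma_iff.mp (hmem x)).2
  rw [mem_Gamma_iff, hasNorthEast_flatten_iff hτ, hasSouthWest_flatten_iff hτ, ← hρ]
  exact ⟨exists_ne_northEast_of_avoidsThrough h4231 h3412 hne hsw hρi (i.succAbove_ne k),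
    exists_ne_southWest_of_avoidsThrough h4231 h3412 hne hsw hρi (i.succAbove_ne k)⟩

end Flattening

open Classical in
theorem statement11_general {n : ℕ} {R : Type*} [CommRing R]
    (σ : Equiv.Perm (Fin (n + 1))) (i : Fin (n + 1))
    (h4231 : AvoidsThrough σ perm4231 i) (h3412 : AvoidsThrough σ perm3412 i)
    (τ : Equiv.Perm (Fin n))
    (hτ : ∀ k : Fin n, σ (i.succAbove k) = (σ i).succAbove (τ k))
    (M : Matrix (Fin n) (Fin n) R) :
    (Matrix.of fun k l : Fin n =>
        if (i.succAbove k, (σ i).succAbove l) ∈ Gamma σ then M k l else 0).det =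
      (restrictGamma M τ).det :=
  det_of_ite_congr M (S := fun k l => (i.succAbove k, (σ i).succAbove l) ∈ Gamma σ)
    (T := fun k l => (k, l) ∈ Gamma τ) fun _ =>
      ⟨graph_mem_Gamma_of_succAbove h4231 h3412 hτ, fun h k => mem_Gamma_succAbove hτ (h k)⟩

open Classical in
/-- Proposition 4.5 (after Chepuri–Sherman-Bennett): let `σ ∈ S_{n+1}` avoid the patterns
`4231` and `3412`, choose `i`, and let `τ ∈ S_n` be the flattened permutation obtained
from `σ` by removing `(i, σ(i))` and relabelling order-preservingly (characterized by
`σ(i.succAbove k) = (σ i).succAbove (τ k)` for all `k`). Then for every `n × n` matrix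
`M`, `det(M|_{Γ[id,σ]_i^{σ(i)}}) = det(M|_{Γ[id,τ]})`, where `Γ[id,σ]_i^{σ(i)}` is
obtained from `Γ[id,σ]` by deleting row `i` and column `σ(i)` and relabelling the
remaining rows and columns order-preservingly. -/
theorem statement11 {n : ℕ} {R : Type*} [CommRing R]
    (σ : Equiv.Perm (Fin (n + 1)))
    (hav1 : Avoids σ perm4231) (hav2 : Avoids σ perm3412)
    (i : Fin (n + 1)) (τ : Equiv.Perm (Fin n))
    (hτ : ∀ k : Fin n, σ (i.succAbove k) = (σ i).succAbove (τ k))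
    (M : Matrix (Fin n) (Fin n) R) :
    (Matrix.of fun k l : Fin n =>
        if (i.succAbove k, (σ i).succAbove l) ∈ Gamma σ then M k l else 0).det =
      (restrictGamma M τ).det :=
  statement11_general σ i (hav1.avoidsThrough i) (hav2.avoidsThrough i) τ hτ M
end
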